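/- arXiv:1212.1997 — 3 statements merged into one kernel-verified Lean document; each statement's English description precedes it below -/
import Mathlib

section
/- Let d ≥ 1 and suppose g satisfies condition (R-8) with constants C > 0, p ≥ 3. Then the function G − G' on M_d × M_d is continuous and there exists a constant K, depending only on C, p and d, such that |G(x,y) − G'(x,y)| ≤ K (1 + ‖x‖ + ‖y‖)^{p−2} ‖y‖² for all x, y ∈ M_d. -/
open MeasureTheory

/-- `Md d` : the space of real `d × d` matrices with the Frobenius norm,
realized as the Euclidean space indexed by the entries. -/
abbrev Md (d : ℕ) := EuclideanSpace ℝ (Fin d × Fin d)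

/-- Condition (R-8): `g` is `C³` and `‖D^j g(x)‖ ≤ C (1 + ‖x‖^{p−j})` for `j = 0,1,2,3`. -/
def R8 {d : ℕ} (g : Md d → ℝ) (C p : ℝ) : Prop :=
  ContDiff ℝ 3 g ∧
    ∀ j : ℕ, j ≤ 3 → ∀ x : Md d, ‖iteratedFDeriv ℝ j g x‖ ≤ C * (1 + ‖x‖ ^ (p - j))

/-- `G g x y = ∫_0^1 ( g(x + w y) − w g(x + y) − (1 − w) g(x) ) dw`. -/
noncomputable def G {d : ℕ} (g : Md d → ℝ) (x y : Md d) : ℝ :=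
  ∫ w in (0:ℝ)..1, (g (x + w • y) - w * g (x + y) - (1 - w) * g x)

/-- Second partial derivative `∂²_{a,b} g (x)` with respect to the entries `a` and `b`. -/
noncomputable def pd2 {d : ℕ} (g : Md d → ℝ) (x : Md d) (a b : Fin d × Fin d) : ℝ :=
  iteratedFDeriv ℝ 2 g x ![EuclideanSpace.single a 1, EuclideanSpace.single b 1]

/-- `G' g x y = −(1/8) Σ_{jk,lm} ∫_0^1 ( ∂²_{jk,lm} g(x) + ∂²_{jk,lm} g(x + (1−w) y) )
w² y^{jk} y^{lm} dw`. -/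
noncomputable def G' {d : ℕ} (g : Md d → ℝ) (x y : Md d) : ℝ :=
  -(1/8) * ∑ a : Fin d × Fin d, ∑ b : Fin d × Fin d,
    ∫ w in (0:ℝ)..1, (pd2 g x a b + pd2 g (x + (1 - w) • y) a b) * w ^ 2 * y a * y b

/-!
`G g x y` is minus the one-step trapezoidal error on `[0, 1]` of `w ↦ g (x + w • y)`, whose second
derivative is `D²g (x + w • y) (y, y)`; hence `|G g x y| ≤ B / 12 * ‖y‖ ^ 2` if `‖D²g‖ ≤ B` on the
segment from `x` to `x + y`. Summing the entrywise second derivatives turns `G' g x y` into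
`-(1/8) ∫ w² (D²g (x) (y, y) + D²g (x + (1 - w) • y) (y, y)) dw`, which obeys the same bound because
`∫ w² = 1/3`. The growth condition allows
`B = 2 * C * (1 + ‖x‖ + ‖y‖) ^ (p - 2)`, so `K = C / 3` works in every dimension.
-/

section IteratedDeriv

variable {𝕜 E F : Type*} [NontriviallyNormedField 𝕜] [NormedAddCommGroup E] [NormedSpace 𝕜 E]
  [NormedAddCommGroup F] [NormedSpace 𝕜 F]

lemma norm_iteratedFDeriv_apply_diag_le {n : ℕ} {g : E → F} {z : E} {B : ℝ}
    (hB : ‖iteratedFDeriv 𝕜 n g z‖ ≤ B) (y : E) :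
    ‖iteratedFDeriv 𝕜 n g z fun _ => y‖ ≤ B * ‖y‖ ^ n := by
  simpa using (iteratedFDeriv 𝕜 n g z).le_of_opNorm_le hB fun _ => y

lemma iteratedDeriv_comp_add_smul {n : ℕ} {g : E → F} (hg : ContDiff 𝕜 n g) (x y : E) (t : 𝕜) :
    iteratedDeriv n (fun s : 𝕜 => g (x + s • y)) t =
      iteratedFDeriv 𝕜 n g (x + t • y) fun _ => y := by
  have hshift : ContDiff 𝕜 n fun z => g (x + z) := by fun_prop
  have hcomp := (ContinuousLinearMap.toSpanSingleton 𝕜 y).iteratedFDeriv_comp_right hshift t le_rfl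
  rw [iteratedDeriv_eq_iteratedFDeriv]
  simpa [Function.comp_def, iteratedFDeriv_comp_add_left] using
    congrArg (fun A => A fun _ => (1 : 𝕜)) hcomp

lemma iteratedDerivWithin_succ_of_notMem_closure (n : ℕ) (f : 𝕜 → F) {s : Set 𝕜} {t : 𝕜}
    (ht : t ∉ closure s) : iteratedDerivWithin (n + 1) f s t = 0 := by
  rw [iteratedDerivWithin_succ, derivWithin_zero_of_notMem_closure ht]

end IteratedDeriv

section Segment

open Set

lemma abs_trapezoidal_error_le_of_contDiff {f : ℝ → ℝ} (hf : ContDiff ℝ 2 f) {a b ζ : ℝ}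
    (hab : a < b) (hζ : ∀ t ∈ Icc a b, |iteratedDeriv 2 f t| ≤ ζ) {N : ℕ} (hN : 0 < N) :
    |trapezoidal_error f N a b| ≤ (b - a) ^ 3 * ζ / (12 * N ^ 2) := by
  have hwithin : ∀ t, |iteratedDerivWithin 2 f (uIcc a b) t| ≤ ζ := by
    intro t
    rw [uIcc_of_le hab.le]
    by_cases ht : t ∈ Icc a b
    · rw [iteratedDerivWithin_eq_iteratedDeriv (uniqueDiffOn_Icc hab) hf.contDiffAt ht]
      exact hζ t ht
    · -- The library bound ranges over all of `ℝ`; off the interval `derivWithin` is the junk `0`.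
      rw [iteratedDerivWithin_succ_of_notMem_closure 1 f (by rwa [isClosed_Icc.closure_eq]),
        abs_zero]
      exact (abs_nonneg _).trans (hζ a (left_mem_Icc.2 hab.le))
  simpa [abs_of_pos (sub_pos.2 hab)] using trapezoidal_error_le_of_c2 hf.contDiffOn hwithin hN

variable {E : Type*} [NormedAddCommGroup E] [NormedSpace ℝ E]

lemma norm_add_smul_le_add_of_mem_Icc (x y : E) {t : ℝ} (ht : t ∈ Icc (0 : ℝ) 1) :
    ‖x + t • y‖ ≤ ‖x‖ + ‖y‖ := by
  have hty : ‖t • y‖ ≤ ‖y‖ := by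
    rw [norm_smul, Real.norm_of_nonneg ht.1]
    exact mul_le_of_le_one_left (norm_nonneg y) ht.2
  exact (norm_add_le _ _).trans (by gcongr)

lemma abs_trapezoidal_error_comp_add_smul_le {g : E → ℝ} (hg : ContDiff ℝ 2 g) {x y : E} {B : ℝ}
    (hB : ∀ t ∈ Icc (0 : ℝ) 1, ‖iteratedFDeriv ℝ 2 g (x + t • y)‖ ≤ B) :
    |trapezoidal_error (fun t : ℝ => g (x + t • y)) 1 0 1| ≤ B / 12 * ‖y‖ ^ 2 := by
  have hline : ContDiff ℝ 2 fun t : ℝ => g (x + t • y) := by fun_prop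
  have hsecond : ∀ t ∈ Icc (0 : ℝ) 1,
      |iteratedDeriv 2 (fun s : ℝ => g (x + s • y)) t| ≤ B * ‖y‖ ^ 2 := by
    intro t ht
    rw [iteratedDeriv_comp_add_smul hg, ← Real.norm_eq_abs]
    exact norm_iteratedFDeriv_apply_diag_le (hB t ht) y
  refine (abs_trapezoidal_error_le_of_contDiff hline zero_lt_one hsecond one_pos).trans_eq ?_
  rw [Nat.cast_one]
  ring

lemma abs_integral_sq_mul_iteratedFDeriv_le {g : E → ℝ} {x y : E} {B : ℝ}
    (hB : ∀ t ∈ Icc (0 : ℝ) 1, ‖iteratedFDeriv ℝ 2 g (x + t • y)‖ ≤ B) :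
    |∫ w in (0 : ℝ)..1, w ^ 2 * (iteratedFDeriv ℝ 2 g x (fun _ => y) +
      iteratedFDeriv ℝ 2 g (x + (1 - w) • y) fun _ => y)| ≤ 2 / 3 * B * ‖y‖ ^ 2 := by
  have hquad : ∀ t ∈ Icc (0 : ℝ) 1,
      |iteratedFDeriv ℝ 2 g (x + t • y) fun _ => y| ≤ B * ‖y‖ ^ 2 :=
    fun t ht => norm_iteratedFDeriv_apply_diag_le (hB t ht) y
  have hbase : |iteratedFDeriv ℝ 2 g x fun _ => y| ≤ B * ‖y‖ ^ 2 := by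
    simpa using hquad 0 (by simp)
  have hdom : IntervalIntegrable (fun w : ℝ => w ^ 2 * (B * ‖y‖ ^ 2 + B * ‖y‖ ^ 2)) volume 0 1 :=
    Continuous.intervalIntegrable (by fun_prop) 0 1
  rw [← Real.norm_eq_abs]
  calc
    _ ≤ ∫ w in (0 : ℝ)..1, w ^ 2 * (B * ‖y‖ ^ 2 + B * ‖y‖ ^ 2) := by
      refine intervalIntegral.norm_integral_le_of_norm_le zero_le_one
        (.of_forall fun w hw => ?_) hdom
      rw [norm_mul, Real.norm_of_nonneg (sq_nonneg w)]
      gcongr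
      exact norm_add_le_of_le hbase (hquad (1 - w) ⟨by linarith [hw.2], by linarith [hw.1]⟩)
    _ = 2 / 3 * B * ‖y‖ ^ 2 := by
      rw [intervalIntegral.integral_mul_const, integral_pow]
      ring

end Segment

lemma map_diag_eq_sum_repr_smul {ι R M N : Type*} [Fintype ι] [CommSemiring R] [AddCommMonoid M]
    [Module R M] [AddCommMonoid N] [Module R N] (A : MultilinearMap R (fun _ : Fin 2 => M) N)
    (e : Module.Basis ι R M) (y : M) :
    A (fun _ => y) = ∑ i, ∑ j, (e.repr y i * e.repr y j) • A ![e i, e j] := by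
  classical
  conv_lhs => rw [← e.sum_repr y]
  rw [A.map_sum, ← (finTwoArrowEquiv ι).symm.sum_comp, Fintype.sum_prod_type]
  refine Finset.sum_congr rfl fun i _ => Finset.sum_congr rfl fun j _ => ?_
  rw [A.map_smul_univ, Fin.prod_univ_two]
  congr 2
  ext k
  fin_cases k <;> rfl

lemma one_add_rpow_le_two_mul_rpow {a r q : ℝ} (ha : 0 ≤ a) (har : a ≤ r) (hq : 0 ≤ q) :
    1 + a ^ q ≤ 2 * (1 + r) ^ q := by
  have hone : 1 ≤ (1 + r) ^ q := Real.one_le_rpow (by linarith) hq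
  have hpow : a ^ q ≤ (1 + r) ^ q := Real.rpow_le_rpow ha (by linarith) hq
  linarith

section Matrices

open Set

variable {d : ℕ}

lemma sum_pd2_mul_mul (g : Md d → ℝ) (z y : Md d) :
    ∑ a, ∑ b, pd2 g z a b * y a * y b = iteratedFDeriv ℝ 2 g z fun _ => y := by
  have hexpand := map_diag_eq_sum_repr_smul (iteratedFDeriv ℝ 2 g z).toMultilinearMap
    (EuclideanSpace.basisFun (Fin d × Fin d) ℝ).toBasis y
  simp only [OrthonormalBasis.coe_toBasis, OrthonormalBasis.coe_toBasis_repr_apply,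
    EuclideanSpace.basisFun_apply, EuclideanSpace.basisFun_repr, smul_eq_mul,
    ContinuousMultilinearMap.coe_coe] at hexpand
  rw [hexpand]
  refine Finset.sum_congr rfl fun a _ => Finset.sum_congr rfl fun b _ => ?_
  rw [pd2]
  ring

variable {g : Md d → ℝ}

lemma continuous_pd2 (hg : ContDiff ℝ 2 g) (a b : Fin d × Fin d) :
    Continuous fun z => pd2 g z a b := by
  have := hg.continuous_iteratedFDeriv le_rfl
  unfold pd2
  fun_prop

lemma G_eq_neg_trapezoidal_error (hg : Continuous g) (x y : Md d) :
    G g x y = -trapezoidal_error (fun w : ℝ => g (x + w • y)) 1 0 1 := by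
  have hint : ∀ {f : ℝ → ℝ}, Continuous f → IntervalIntegrable f volume 0 1 :=
    fun hf => hf.intervalIntegrable 0 1
  rw [G, intervalIntegral.integral_sub (hint (by fun_prop)) (hint (by fun_prop)),
    intervalIntegral.integral_sub (hint (by fun_prop)) (hint (by fun_prop)),
    intervalIntegral.integral_mul_const, intervalIntegral.integral_mul_const,
    intervalIntegral.integral_sub (hint (by fun_prop)) (hint (by fun_prop)), trapezoidal_error]
  simp only [trapezoidal_integral_one, integral_id, intervalIntegral.integral_const, smul_eq_mul,
    zero_smul, one_smul, add_zero]
  ring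

lemma G'_eq_integral_iteratedFDeriv (hg : ContDiff ℝ 2 g) (x y : Md d) :
    G' g x y = -(1 / 8) * ∫ w in (0 : ℝ)..1, w ^ 2 * (iteratedFDeriv ℝ 2 g x (fun _ => y) +
      iteratedFDeriv ℝ 2 g (x + (1 - w) • y) fun _ => y) := by
  have hcont : ∀ a b, Continuous fun w : ℝ =>
      (pd2 g x a b + pd2 g (x + (1 - w) • y) a b) * w ^ 2 * y a * y b := by
    intro a b
    have hpd2 := continuous_pd2 hg a b
    fun_prop
  have hcontSum : ∀ a, Continuous fun w : ℝ =>
      ∑ b, (pd2 g x a b + pd2 g (x + (1 - w) • y) a b) * w ^ 2 * y a * y b :=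
    fun a => continuous_finsetSum _ fun b _ => hcont a b
  simp_rw [G', ← intervalIntegral.integral_finsetSum
    fun b _ => (hcont _ b).intervalIntegrable (μ := volume) 0 1]
  rw [← intervalIntegral.integral_finsetSum
    fun a _ => (hcontSum a).intervalIntegrable (μ := volume) 0 1]
  simp only [← sum_pd2_mul_mul, ← Finset.sum_add_distrib, Finset.mul_sum]
  refine congrArg _ (intervalIntegral.integral_congr fun w _ => ?_)
  exact Finset.sum_congr rfl fun a _ => Finset.sum_congr rfl fun b _ => by ring

lemma continuous_G (hg : Continuous g) : Continuous fun q : Md d × Md d => G g q.1 q.2 := by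
  unfold G
  fun_prop

lemma continuous_G' (hg : ContDiff ℝ 2 g) : Continuous fun q : Md d × Md d => G' g q.1 q.2 := by
  have := hg.continuous_iteratedFDeriv le_rfl
  simp only [G'_eq_integral_iteratedFDeriv hg]
  fun_prop

lemma abs_G_sub_G'_le {x y : Md d} {B : ℝ} (hg : ContDiff ℝ 2 g)
    (hB : ∀ t ∈ Icc (0 : ℝ) 1, ‖iteratedFDeriv ℝ 2 g (x + t • y)‖ ≤ B) :
    |G g x y - G' g x y| ≤ B / 6 * ‖y‖ ^ 2 := by
  have hG : |G g x y| ≤ B / 12 * ‖y‖ ^ 2 := by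
    rw [G_eq_neg_trapezoidal_error hg.continuous, abs_neg]
    exact abs_trapezoidal_error_comp_add_smul_le hg hB
  have hG' : |G' g x y| ≤ 1 / 8 * (2 / 3 * B * ‖y‖ ^ 2) := by
    rw [G'_eq_integral_iteratedFDeriv hg, abs_mul, abs_neg, abs_of_pos (by norm_num)]
    gcongr
    exact abs_integral_sq_mul_iteratedFDeriv_le hB
  linarith [abs_sub (G g x y) (G' g x y)]

theorem stmt2_general {C p : ℝ} (hp : 2 ≤ p) (hg : ContDiff ℝ 2 g)
    (hbound : ∀ x, ‖iteratedFDeriv ℝ 2 g x‖ ≤ C * (1 + ‖x‖ ^ (p - 2))) :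
    Continuous (fun q : Md d × Md d => G g q.1 q.2 - G' g q.1 q.2) ∧
      ∀ x y : Md d, |G g x y - G' g x y| ≤ C / 3 * (1 + ‖x‖ + ‖y‖) ^ (p - 2) * ‖y‖ ^ 2 := by
  refine ⟨(continuous_G hg.continuous).sub (continuous_G' hg), fun x y => ?_⟩
  have hC : 0 ≤ C :=
    nonneg_of_mul_nonneg_left ((norm_nonneg _).trans (hbound 0)) (by positivity)
  have hsegment : ∀ t ∈ Icc (0 : ℝ) 1, ‖iteratedFDeriv ℝ 2 g (x + t • y)‖ ≤
      C * (2 * (1 + (‖x‖ + ‖y‖)) ^ (p - 2)) := by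
    intro t ht
    refine (hbound _).trans (mul_le_mul_of_nonneg_left ?_ hC)
    exact one_add_rpow_le_two_mul_rpow (norm_nonneg _) (norm_add_smul_le_add_of_mem_Icc x y ht)
      (by linarith)
  refine (abs_G_sub_G'_le hg hsegment).trans_eq ?_
  rw [add_assoc]
  ring

end Matrices

/-- If `g` satisfies (R-8) with constants `C > 0`, `p ≥ 3`, then `G − G'` is continuous on
`M_d × M_d` and `|G(x,y) − G'(x,y)| ≤ K (1 + ‖x‖ + ‖y‖)^{p−2} ‖y‖²` for a constant `K`
depending only on `C`, `p`, `d`. -/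
theorem stmt2 (d : ℕ) (hd : 1 ≤ d) (C p : ℝ) (hC : 0 < C) (hp : 3 ≤ p) :
    ∃ K : ℝ, ∀ g : Md d → ℝ, R8 g C p →
      Continuous (fun q : Md d × Md d => G g q.1 q.2 - G' g q.1 q.2) ∧
      ∀ x y : Md d, |G g x y - G' g x y| ≤ K * (1 + ‖x‖ + ‖y‖) ^ (p - 2) * ‖y‖ ^ 2 := by
  refine ⟨C / 3, fun g ⟨hg, hbound⟩ => ?_⟩
  exact stmt2_general (by linarith) (hg.of_le (by norm_num)) (by simpa using hbound 2 (by norm_num))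
end

section
/- Let d ≥ 1, suppose g satisfies condition (R-8) with constants C > 0, p ≥ 3, and define R(x,y) := Σ_{j,k,l,m=1}^d ∂²_{jk,lm} g(x) (y^{jk} − x^{jk})(y^{lm} − x^{lm}). Then there exists a constant K, depending only on C, p and d, such that for all x, y, x', y' ∈ M_d: |R(x,y) − R(x',y')| ≤ K (1 + ‖x'‖ + ‖y'‖)^{p−1} ( ‖x − x'‖ + ‖y − y'‖ ) + K ‖x − x'‖^p + K ‖y − y'‖^p. -/
open MeasureTheory

/-- `R(x,y) = Σ_{jk,lm} ∂²_{jk,lm} g(x) (y^{jk} − x^{jk})(y^{lm} − x^{lm})`. -/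
noncomputable def Rg {d : ℕ} (g : Md d → ℝ) (x y : Md d) : ℝ :=
  ∑ a : Fin d × Fin d, ∑ b : Fin d × Fin d, pd2 g x a b * (y a - x a) * (y b - x b)

/-
Contracting partial derivatives with the increment gives `R(x, y) = D²g(x)(y - x, y - x)`, so we
compare the values of two multilinear maps on two diagonals; the same works for `Dⁿg` of any order.
Put `T = 1 + ‖x'‖ + ‖y'‖ + ‖x - x'‖ + ‖y - y'‖`. All points and increments involved have norm at
most `T`, so the mean value inequality for `D²g` and the bound on `D²g` itself give a difference of
order `T ^ (p - 1) * (‖x - x'‖ + ‖y - y'‖)`. Splitting `T ^ (p - 1)` into the part coming from the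
base points and the part coming from the increments yields the three terms of the estimate.
-/

section RealPowers

theorem one_add_rpow_le_two_mul_rpow_s8 {t T q : ℝ} (ht : 0 ≤ t) (htT : t ≤ T) (hT : 1 ≤ T)
    (hq : 0 ≤ q) : 1 + t ^ q ≤ 2 * T ^ q := by
  have one_le : 1 ≤ T ^ q := Real.one_le_rpow hT hq
  have le_T : t ^ q ≤ T ^ q := Real.rpow_le_rpow ht htT hq
  linarith

theorem add_rpow_le_two_rpow_mul_add {a b q : ℝ} (ha : 0 ≤ a) (hb : 0 ≤ b) (hq : 0 ≤ q) :
    (a + b) ^ q ≤ 2 ^ q * (a ^ q + b ^ q) :=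
  calc (a + b) ^ q ≤ (2 * max a b) ^ q := by
        gcongr
        linarith [le_max_left a b, le_max_right a b]
    _ = 2 ^ q * max (a ^ q) (b ^ q) := by
        rw [Real.mul_rpow zero_le_two (le_max_of_le_left ha), Real.rpow_max ha hb hq]
    _ ≤ 2 ^ q * (a ^ q + b ^ q) := by
        gcongr
        exact max_le_add_of_nonneg (by positivity) (by positivity)

theorem add_rpow_sub_one_mul_le {M a b p : ℝ} (hM : 0 ≤ M) (ha : 0 ≤ a) (hb : 0 ≤ b)
    (hp : 1 ≤ p) :
    (M + (a + b)) ^ (p - 1) * (a + b) ≤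
      4 ^ p * (M ^ (p - 1) * (a + b) + a ^ p + b ^ p) := by
  have rpow_mul_self : (a + b) ^ (p - 1) * (a + b) = (a + b) ^ p := by
    rw [← Real.rpow_add_one' (by positivity) (by linarith), sub_add_cancel]
  have one_le : (1 : ℝ) ≤ 2 ^ p := Real.one_le_rpow one_le_two (by linarith)
  calc (M + (a + b)) ^ (p - 1) * (a + b)
      ≤ 2 ^ (p - 1) * (M ^ (p - 1) + (a + b) ^ (p - 1)) * (a + b) := by
        gcongr
        exact add_rpow_le_two_rpow_mul_add hM (by positivity) (by linarith)
    _ = 2 ^ (p - 1) * (M ^ (p - 1) * (a + b) + (a + b) ^ p) := by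
        rw [← rpow_mul_self]
        ring
    _ ≤ 2 ^ p * (2 ^ p * (M ^ (p - 1) * (a + b)) + 2 ^ p * (a ^ p + b ^ p)) := by
        have two_rpow_le : (2 : ℝ) ^ (p - 1) ≤ 2 ^ p :=
          Real.rpow_le_rpow_of_exponent_le one_le_two (by linarith)
        exact mul_le_mul two_rpow_le (add_le_add (le_mul_of_one_le_left (by positivity) one_le)
          (add_rpow_le_two_rpow_mul_add ha hb (by linarith))) (by positivity) (by positivity)
    _ = 4 ^ p * (M ^ (p - 1) * (a + b) + a ^ p + b ^ p) := by
        rw [show (4 : ℝ) = 2 * 2 by norm_num, Real.mul_rpow zero_le_two zero_le_two]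
        ring

end RealPowers

section Diagonal

variable {E F : Type*} [NormedAddCommGroup E] [NormedAddCommGroup F] {n : ℕ}

theorem norm_apply_diag_sub_le {𝕜 : Type*} [NontriviallyNormedField 𝕜] [NormedSpace 𝕜 E]
    [NormedSpace 𝕜 F] (A B : E [×n]→L[𝕜] F) {u v : E} {T : ℝ} (hu : ‖u‖ ≤ T) (hv : ‖v‖ ≤ T) :
    ‖A (fun _ ↦ u) - B (fun _ ↦ v)‖ ≤
      ‖A - B‖ * T ^ n + ‖B‖ * n * T ^ (n - 1) * ‖u - v‖ := by
  have hT : 0 ≤ T := (norm_nonneg u).trans hu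
  have change_map : ‖(A - B) fun _ ↦ u‖ ≤ ‖A - B‖ * T ^ n := by
    simpa using (A - B).le_opNorm_mul_prod_of_le (m := fun _ ↦ u) (b := fun _ ↦ T) fun _ ↦ hu
  have change_point : ‖B (fun _ ↦ u) - B (fun _ ↦ v)‖ ≤ ‖B‖ * n * T ^ (n - 1) * ‖u - v‖ := by
    have diag_le {w : E} (hw : ‖w‖ ≤ T) : ‖fun _ : Fin n ↦ w‖ ≤ T :=
      (pi_norm_const_le w).trans hw
    refine (B.norm_image_sub_le _ _).trans ?_
    rw [Fintype.card_fin]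
    gcongr
    · exact max_le (diag_le hu) (diag_le hv)
    · exact pi_norm_const_le (u - v)
  calc ‖A (fun _ ↦ u) - B (fun _ ↦ v)‖
      = ‖(A - B) (fun _ ↦ u) + (B (fun _ ↦ u) - B (fun _ ↦ v))‖ := by simp
    _ ≤ _ := (norm_add_le _ _).trans (add_le_add change_map change_point)

variable [NormedSpace ℝ E] [NormedSpace ℝ F]

theorem norm_sub_le_of_norm_fderiv_le_one_add_rpow {f : E → F} {C q T : ℝ}
    (hf : Differentiable ℝ f) (hbound : ∀ z, ‖fderiv ℝ f z‖ ≤ C * (1 + ‖z‖ ^ q)) (hC : 0 ≤ C)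
    (hq : 0 ≤ q) (hT : 1 ≤ T) {x x' : E} (hx : ‖x‖ ≤ T) (hx' : ‖x'‖ ≤ T) :
    ‖f x - f x'‖ ≤ C * (2 * T ^ q) * ‖x - x'‖ := by
  refine (convex_closedBall (0 : E) T).norm_image_sub_le_of_norm_fderiv_le (𝕜 := ℝ)
    (fun z _ ↦ hf z) (fun z hz ↦ (hbound z).trans ?_) (by simpa using hx') (by simpa using hx)
  gcongr
  exact one_add_rpow_le_two_mul_rpow_s8 (norm_nonneg z) (by simpa using hz) hT hq

theorem norm_apply_diag_sub_le_of_growth {f : E → E [×n]→L[ℝ] F} {C p T s : ℝ}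
    (hp : n + 1 ≤ p) (hf : Differentiable ℝ f)
    (hbound : ∀ z, ‖f z‖ ≤ C * (1 + ‖z‖ ^ (p - n)))
    (hbound' : ∀ z, ‖fderiv ℝ f z‖ ≤ C * (1 + ‖z‖ ^ (p - (n + 1))))
    (hT : 1 ≤ T) {x x' u u' : E} (hx : ‖x‖ ≤ T) (hx' : ‖x'‖ ≤ T) (hu : ‖u‖ ≤ T) (hu' : ‖u'‖ ≤ T)
    (hxs : ‖x - x'‖ ≤ s) (hus : ‖u - u'‖ ≤ s) :
    ‖f x (fun _ ↦ u) - f x' (fun _ ↦ u')‖ ≤ 2 * (n + 1) * C * (T ^ (p - 1) * s) := by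
  have hC : 0 ≤ C := nonneg_of_mul_nonneg_left ((norm_nonneg _).trans (hbound 0)) (by positivity)
  have hT0 : T ≠ 0 := by positivity
  have diff_le : ‖f x - f x'‖ ≤ C * (2 * T ^ (p - (n + 1))) * ‖x - x'‖ :=
    norm_sub_le_of_norm_fderiv_le_one_add_rpow hf hbound' hC (by linarith) hT hx hx'
  have value_le : ‖f x'‖ ≤ C * (2 * T ^ (p - n)) := by
    refine (hbound x').trans ?_
    gcongr
    exact one_add_rpow_le_two_mul_rpow_s8 (norm_nonneg x') hx' hT (by linarith)
  have rpow_diff : T ^ (p - (n + 1)) * T ^ n = T ^ (p - 1) := by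
    rw [← Real.rpow_add_natCast hT0]
    ring_nf
  -- The factor `n` absorbs the truncated exponent `n - 1` at `n = 0`.
  have rpow_value : n * (T ^ (p - n) * T ^ (n - 1)) = n * T ^ (p - 1) := by
    rcases n with _ | m
    · simp
    · rw [Nat.add_sub_cancel, ← Real.rpow_add_natCast hT0]
      push_cast
      ring_nf
  calc ‖f x (fun _ ↦ u) - f x' (fun _ ↦ u')‖
      ≤ ‖f x - f x'‖ * T ^ n + ‖f x'‖ * n * T ^ (n - 1) * ‖u - u'‖ :=
        norm_apply_diag_sub_le _ _ hu hu'
    _ ≤ C * (2 * T ^ (p - (n + 1))) * s * T ^ n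
          + C * (2 * T ^ (p - n)) * n * T ^ (n - 1) * s := by
        gcongr
        exact diff_le.trans (by gcongr)
    _ = 2 * C * s * (T ^ (p - (n + 1)) * T ^ n + n * (T ^ (p - n) * T ^ (n - 1))) := by ring
    _ = 2 * (n + 1) * C * (T ^ (p - 1) * s) := by
        rw [rpow_diff, rpow_value]
        ring

theorem stmt8_general {g : E → F} {C p : ℝ} (hp : n + 1 ≤ p)
    (hg : Differentiable ℝ (iteratedFDeriv ℝ n g))
    (hbound : ∀ z, ‖iteratedFDeriv ℝ n g z‖ ≤ C * (1 + ‖z‖ ^ (p - n)))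
    (hbound' : ∀ z, ‖iteratedFDeriv ℝ (n + 1) g z‖ ≤ C * (1 + ‖z‖ ^ (p - (n + 1))))
    (x y x' y' : E) :
    ‖iteratedFDeriv ℝ n g x (fun _ ↦ y - x) - iteratedFDeriv ℝ n g x' (fun _ ↦ y' - x')‖ ≤
      2 * (n + 1) * C * 4 ^ p * ((1 + ‖x'‖ + ‖y'‖) ^ (p - 1) * (‖x - x'‖ + ‖y - y'‖)
        + ‖x - x'‖ ^ p + ‖y - y'‖ ^ p) := by
  have hC : 0 ≤ C := nonneg_of_mul_nonneg_left ((norm_nonneg _).trans (hbound 0)) (by positivity)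
  have hx : ‖x‖ ≤ ‖x'‖ + ‖x - x'‖ := norm_le_norm_add_norm_sub' x x'
  have hy : ‖y‖ ≤ ‖y'‖ + ‖y - y'‖ := norm_le_norm_add_norm_sub' y y'
  have hu : ‖y - x‖ ≤ ‖y‖ + ‖x‖ := norm_sub_le y x
  have hu' : ‖y' - x'‖ ≤ ‖y'‖ + ‖x'‖ := norm_sub_le y' x'
  have hus : ‖(y - x) - (y' - x')‖ ≤ ‖y - y'‖ + ‖x - x'‖ := by
    rw [sub_sub_sub_comm]
    exact norm_sub_le _ _
  calc _ ≤ 2 * (n + 1) * C * ((1 + ‖x'‖ + ‖y'‖ + (‖x - x'‖ + ‖y - y'‖)) ^ (p - 1)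
          * (‖x - x'‖ + ‖y - y'‖)) := by
        apply norm_apply_diag_sub_le_of_growth hp hg hbound
          (fun z ↦ norm_fderiv_iteratedFDeriv.trans_le (hbound' z)) <;>
        linarith [norm_nonneg x', norm_nonneg y', norm_nonneg (x - x'), norm_nonneg (y - y')]
    _ ≤ 2 * (n + 1) * C * (4 ^ p * ((1 + ‖x'‖ + ‖y'‖) ^ (p - 1) * (‖x - x'‖ + ‖y - y'‖)
          + ‖x - x'‖ ^ p + ‖y - y'‖ ^ p)) := by
        have one_le_p : 1 ≤ p := by linarith [n.cast_nonneg (α := ℝ)]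
        exact mul_le_mul_of_nonneg_left (add_rpow_sub_one_mul_le (by positivity) (by positivity)
          (by positivity) one_le_p) (by positivity)
    _ = _ := by ring

end Diagonal

theorem Rg_eq_iteratedFDeriv_diag {d : ℕ} (g : Md d → ℝ) (x y : Md d) :
    Rg g x y = iteratedFDeriv ℝ 2 g x fun _ ↦ y - x := by
  have expansion : y - x = ∑ a, (y a - x a) • (EuclideanSpace.single a 1 : Md d) := by
    simpa using ((EuclideanSpace.basisFun (Fin d × Fin d) ℝ).sum_repr (y - x)).symm
  rw [iteratedFDeriv_two_apply, expansion]
  simp only [Rg, pd2, iteratedFDeriv_two_apply, map_sum, map_smul, sum_apply, smul_apply,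
    smul_eq_mul, Finset.mul_sum]
  rw [Finset.sum_comm]
  refine Finset.sum_congr rfl fun a _ ↦ Finset.sum_congr rfl fun b _ ↦ ?_
  simp only [Matrix.cons_val_zero, Matrix.cons_val_one]
  ring

/-- If `g` satisfies (R-8) with constants `C > 0`, `p ≥ 3`, then there is a constant `K`
(depending only on `C`, `p`, `d`) such that for all `x, y, x', y'`:
`|R(x,y) − R(x',y')| ≤ K (1 + ‖x'‖ + ‖y'‖)^{p−1} (‖x − x'‖ + ‖y − y'‖)
  + K ‖x − x'‖^p + K ‖y − y'‖^p`. -/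
theorem stmt8 (d : ℕ) (hd : 1 ≤ d) (C p : ℝ) (hC : 0 < C) (hp : 3 ≤ p) :
    ∃ K : ℝ, ∀ g : Md d → ℝ, R8 g C p →
      ∀ x y x' y' : Md d,
        |Rg g x y - Rg g x' y'| ≤
          K * (1 + ‖x'‖ + ‖y'‖) ^ (p - 1) * (‖x - x'‖ + ‖y - y'‖) +
            K * ‖x - x'‖ ^ p + K * ‖y - y'‖ ^ p := by
  refine ⟨2 * ((2 : ℕ) + 1) * C * 4 ^ p, fun g hg x y x' y' ↦ ?_⟩
  have estimate := stmt8_general (n := 2) (by push_cast; linarith)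
    (hg.1.differentiable_iteratedFDeriv (by norm_num)) (hg.2 2 (by norm_num))
    (by exact_mod_cast hg.2 3 le_rfl) x y x' y'
  simpa only [Rg_eq_iteratedFDeriv_diag, Real.norm_eq_abs, mul_add, mul_assoc] using estimate
end

section
/- Let (Ω, F, (F_t)_{t≥0}, P) be a filtered probability space, A > 0, and let Y be an adapted ℝ^d-valued process with right-continuous paths and Y_0 = 0. Let b be an adapted ℝ^d-valued process with càdlàg paths and ‖b_t‖ ≤ A for all t, and assume that M_t := Y_t − ∫_0^t b_s ds is a martingale. Then for all t ∈ (0,1], almost surely, ‖ E(Y_t | F_0) − t b_0 ‖ ≤ t · η(b)_{0,t} ≤ 2At, where η(b)_{0,t} := sqrt( E( sup_{0 < u ≤ t} ‖b_u − b_0‖² | F_0 ) ). -/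
open MeasureTheory Filter

/-- A càdlàg function: right-continuous everywhere, with left limits everywhere. -/
def Cadlag {E : Type*} [TopologicalSpace E] (f : ℝ → E) : Prop :=
  (∀ t : ℝ, ContinuousWithinAt f (Set.Ici t) t) ∧
    (∀ t : ℝ, ∃ l : E, Tendsto f (nhdsWithin t (Set.Iio t)) (nhds l))

/-- `η(Z)_{t,s} = sqrt( E( sup_{0 < u ≤ s} ‖Z_{t+u} − Z_t‖² | F_t ) )`. -/
noncomputable def eta {Ω : Type*} {m0 : MeasurableSpace Ω} (μ : Measure Ω)
    (F : Filtration ℝ m0) {E : Type*} [NormedAddCommGroup E]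
    (Z : ℝ → Ω → E) (t s : ℝ) (ω : Ω) : ℝ :=
  Real.sqrt ((μ[(fun ω' => ⨆ u ∈ Set.Ioc (0:ℝ) s, ‖Z (t + u) ω' - Z t ω'‖ ^ 2) | F t]) ω)

/-!
The increment of `Y` over `[t, t + s]` differs from that of the martingale `M` by
`∫_t^{t+s} b_u du`, so conditionally on `F_t` only this integral contributes. It differs from
`s • b_t` by at most `s` times the square root of `sup_{0 < u ≤ s} ‖b_{t+u} - b_t‖²`, and
conditional Jensen for the squared norm moves the conditional expectation under the square root.
Right-continuity of `b` supplies the measurability, by approximating times from the right by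
rational ones.
-/

section RightContinuous

/-- The smallest point of the grid `(1 / (n + 1)) ℤ` that is at least `u`. As `n → ∞` these
rational points approach `u` from the right. -/
noncomputable def gridCeil (n : ℕ) (u : ℝ) : ℝ := ⌈((n : ℝ) + 1) * u⌉ / ((n : ℝ) + 1)

lemma le_gridCeil (n : ℕ) (u : ℝ) : u ≤ gridCeil n u := by
  rw [gridCeil, le_div_iff₀' n.cast_add_one_pos]
  exact Int.le_ceil _

lemma gridCeil_le_add (n : ℕ) (u : ℝ) : gridCeil n u ≤ u + 1 / ((n : ℝ) + 1) := by
  calc gridCeil n u ≤ (((n : ℝ) + 1) * u + 1) / ((n : ℝ) + 1) := by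
        unfold gridCeil
        gcongr
        exact (Int.ceil_lt_add_one _).le
    _ = u + 1 / ((n : ℝ) + 1) := by field_simp

lemma gridCeil_mem_range_ratCast (n : ℕ) (u : ℝ) : gridCeil n u ∈ Set.range ((↑) : ℚ → ℝ) :=
  ⟨⌈((n : ℝ) + 1) * u⌉ / ((n : ℚ) + 1), by simp [gridCeil]⟩

lemma tendsto_gridCeil (u : ℝ) : Tendsto (gridCeil · u) atTop (nhds u) := by
  have hupper : Tendsto (fun n : ℕ => u + 1 / ((n : ℝ) + 1)) atTop (nhds u) := by
    simpa using tendsto_const_nhds.add (tendsto_one_div_add_atTop_nhds_zero_nat (𝕜 := ℝ))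
  exact tendsto_of_tendsto_of_tendsto_of_le_of_le tendsto_const_nhds hupper
    (le_gridCeil · u) (gridCeil_le_add · u)

lemma tendsto_gridCeil_nhdsGE (u : ℝ) :
    Tendsto (gridCeil · u) atTop (nhdsWithin u (Set.Ici u)) :=
  tendsto_nhdsWithin_iff.2 ⟨tendsto_gridCeil u, .of_forall (le_gridCeil · u)⟩

lemma tendsto_min_gridCeil_nhdsGE {u c : ℝ} (huc : u ≤ c) :
    Tendsto (fun n => min (gridCeil n u) c) atTop (nhdsWithin u (Set.Ici u)) := by
  refine tendsto_nhdsWithin_iff.2 ⟨?_, .of_forall fun n => le_min (le_gridCeil n u) huc⟩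
  simpa only [min_eq_left huc] using
    (tendsto_gridCeil u).min (tendsto_const_nhds (x := c))

lemma measurable_uncurry_of_rightContinuous {Ω E : Type*} [MeasurableSpace Ω]
    [TopologicalSpace E] [TopologicalSpace.PseudoMetrizableSpace E] [MeasurableSpace E]
    [BorelSpace E] {Z : ℝ → Ω → E} (hZ : ∀ t, Measurable (Z t))
    (hrc : ∀ ω t, ContinuousWithinAt (Z · ω) (Set.Ici t) t) :
    Measurable (Function.uncurry Z) := by
  refine measurable_of_tendsto_metrizable
    (f := fun (n : ℕ) (p : ℝ × Ω) => Z (gridCeil n p.1) p.2) (fun n => ?_) ?_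
  · have hgrid : Measurable fun p : ℤ × Ω => Z (p.1 / ((n : ℝ) + 1)) p.2 :=
      measurable_from_prod_countable_right fun k => hZ (k / ((n : ℝ) + 1))
    exact hgrid.comp
      ((Int.measurable_ceil.comp (measurable_fst.const_mul _)).prodMk measurable_snd)
  · exact tendsto_pi_nhds.2 fun p =>
      (hrc p.2 p.1).tendsto.comp (tendsto_gridCeil_nhdsGE p.1)

lemma le_real_biSup {ι : Type*} {S : Set ι} {g : ι → ℝ} {B : ℝ} (hgB : ∀ i ∈ S, g i ≤ B)
    {i : ι} (hi : i ∈ S) : g i ≤ ⨆ j ∈ S, g j := by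
  -- The inner supremum takes the value `0` at indices outside `S`.
  have hbdd : BddAbove (Set.range fun j => ⨆ _ : j ∈ S, g j) :=
    ⟨max B 0, Set.forall_mem_range.2 fun j =>
      Real.iSup_le (fun hj => le_max_of_le_left (hgB j hj)) (le_max_right B 0)⟩
  simpa only [ciSup_pos hi] using le_ciSup hbdd i

lemma biSup_Ioc_eq_biSup_rat {g : ℝ → ℝ} {a c B : ℝ} (hg0 : ∀ u, 0 ≤ g u)
    (hgB : ∀ u ∈ Set.Ioc a c, g u ≤ B) (hrc : ∀ u, ContinuousWithinAt g (Set.Ici u) u) :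
    ⨆ u ∈ Set.Ioc a c, g u =
      ⨆ u ∈ Set.Ioc a c ∩ insert c (Set.range ((↑) : ℚ → ℝ)), g u := by
  have biSup_nonneg (S : Set ℝ) : 0 ≤ ⨆ u ∈ S, g u :=
    Real.iSup_nonneg fun u => Real.iSup_nonneg fun _ => hg0 u
  apply le_antisymm <;>
    refine Real.iSup_le (fun u => Real.iSup_le (fun hu => ?_) (biSup_nonneg _)) (biSup_nonneg _)
  · have hmem (n : ℕ) : min (gridCeil n u) c ∈ insert c (Set.range ((↑) : ℚ → ℝ)) := by
      rcases min_choice (gridCeil n u) c with h | h <;> rw [h]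
      · exact .inr (gridCeil_mem_range_ratCast n u)
      · exact .inl rfl
    exact le_of_tendsto' ((hrc u).tendsto.comp (tendsto_min_gridCeil_nhdsGE hu.2)) fun n =>
      le_real_biSup (fun v hv => hgB v hv.1)
        ⟨⟨hu.1.trans_le (le_min (le_gridCeil n u) hu.2), min_le_right _ _⟩, hmem n⟩
  · exact le_real_biSup hgB hu.1

end RightContinuous

section ConditionalExpectation

variable {Ω E : Type*} {m m0 : MeasurableSpace Ω} {μ : Measure Ω} [NormedAddCommGroup E]
  [NormedSpace ℝ E] [CompleteSpace E]

lemma norm_condExp_le_sqrt_condExp {f : Ω → E} {S : Ω → ℝ} (hf : AEStronglyMeasurable f μ)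
    (hS : Integrable S μ) (hfS : ∀ᵐ ω ∂μ, ‖f ω‖ ^ 2 ≤ S ω) :
    ∀ᵐ ω ∂μ, ‖(μ[f | m]) ω‖ ≤ √((μ[S | m]) ω) := by
  have hf2 : Integrable (fun ω => ‖f ω‖ ^ (2 : ℝ)) μ := by
    simp only [Real.rpow_two]
    refine hS.mono' (hf.norm.pow 2) ?_
    simpa only [Real.norm_eq_abs, abs_pow, abs_norm] using hfS
  have hmono : μ[fun ω => ‖f ω‖ ^ (2 : ℝ) | m] ≤ᵐ[μ] μ[S | m] :=
    condExp_mono hf2 hS (hfS.mono fun ω hω => by simpa only [Real.rpow_two] using hω)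
  filter_upwards [Integrable.norm_condExp_rpow_le (m := m) one_le_two hf2, hmono] with ω hJensen hle
  rw [Real.rpow_two] at hJensen
  exact Real.le_sqrt_of_sq_le (hJensen.trans hle)

lemma norm_condExp_le_mul_sqrt_condExp {f : Ω → E} {S : Ω → ℝ} {c : ℝ} (hc : 0 ≤ c)
    (hf : AEStronglyMeasurable f μ) (hS : Integrable S μ) (hS0 : ∀ᵐ ω ∂μ, 0 ≤ S ω)
    (hfS : ∀ᵐ ω ∂μ, ‖f ω‖ ≤ c * √(S ω)) :
    ∀ᵐ ω ∂μ, ‖(μ[f | m]) ω‖ ≤ c * √((μ[S | m]) ω) := by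
  have hsq : ∀ᵐ ω ∂μ, ‖f ω‖ ^ 2 ≤ (c ^ 2 • S) ω := by
    filter_upwards [hS0, hfS] with ω h0 hle
    calc ‖f ω‖ ^ 2 ≤ (c * √(S ω)) ^ 2 := by gcongr
      _ = c ^ 2 * S ω := by rw [mul_pow, Real.sq_sqrt h0]
  filter_upwards [norm_condExp_le_sqrt_condExp (m := m) hf (hS.smul (c ^ 2)) hsq,
    condExp_smul (c ^ 2) S m] with ω hle hsmul
  rwa [hsmul, Pi.smul_apply, smul_eq_mul, Real.sqrt_mul (sq_nonneg c), Real.sqrt_sq hc] at hle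

end ConditionalExpectation

lemma norm_integral_sub_smul_le {E : Type*} [NormedAddCommGroup E] [NormedSpace ℝ E]
    [CompleteSpace E] {f : ℝ → E} {t s C : ℝ} {x : E} (hs : 0 ≤ s)
    (hf : IntervalIntegrable f volume t (t + s))
    (hC : ∀ u ∈ Set.Ioc 0 s, ‖f (t + u) - x‖ ≤ C) :
    ‖(∫ r in t..t + s, f r) - s • x‖ ≤ s * C := by
  have heq : (∫ r in t..t + s, f r) - s • x = ∫ r in t..t + s, (f r - x) := by
    rw [intervalIntegral.integral_sub hf intervalIntegrable_const,
      intervalIntegral.integral_const, add_sub_cancel_left]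
  have hle : ∀ r ∈ Set.uIoc t (t + s), ‖f r - x‖ ≤ C := fun r hr => by
    rw [Set.uIoc_of_le (by linarith)] at hr
    simpa using hC (r - t) ⟨by linarith [hr.1], by linarith [hr.2]⟩
  simpa [heq, abs_of_nonneg hs, mul_comm] using
    intervalIntegral.norm_integral_le_of_norm_le_const hle

/-- The squared oscillation `sup_{0 < u ≤ s} ‖Z_{t+u} - Z_t‖²`, whose conditional expectation
given `F_t` is `η(Z)_{t,s}²`. It is a real supremum, hence `0` when the supremum is infinite. -/
noncomputable def sqOscillation {Ω E : Type*} [NormedAddCommGroup E] (Z : ℝ → Ω → E) (t s : ℝ)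
    (ω : Ω) : ℝ :=
  ⨆ u ∈ Set.Ioc (0 : ℝ) s, ‖Z (t + u) ω - Z t ω‖ ^ 2

section BoundedProcess

variable {Ω E : Type*} {m0 : MeasurableSpace Ω} {μ : Measure Ω} {F : Filtration ℝ m0}
  [NormedAddCommGroup E] {b : ℝ → Ω → E} {A : ℝ}

lemma eta_eq_sqrt_condExp_sqOscillation (t s : ℝ) (ω : Ω) :
    eta μ F b t s ω = √((μ[sqOscillation b t s | F t]) ω) := rfl

lemma sqOscillation_nonneg (t s : ℝ) (ω : Ω) : 0 ≤ sqOscillation b t s ω :=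
  Real.iSup_nonneg fun _ => Real.iSup_nonneg fun _ => sq_nonneg _

lemma sq_norm_sub_le_of_norm_le {x y : E} (hx : ‖x‖ ≤ A) (hy : ‖y‖ ≤ A) :
    ‖x - y‖ ^ 2 ≤ (2 * A) ^ 2 := by
  gcongr
  linarith [norm_sub_le x y]

lemma sqOscillation_le (hA : ∀ t ω, ‖b t ω‖ ≤ A) (t s : ℝ) (ω : Ω) :
    sqOscillation b t s ω ≤ (2 * A) ^ 2 :=
  Real.iSup_le (fun _ => Real.iSup_le
    (fun _ => sq_norm_sub_le_of_norm_le (hA _ ω) (hA t ω)) (sq_nonneg _)) (sq_nonneg _)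

lemma norm_sub_le_sqrt_sqOscillation (hA : ∀ t ω, ‖b t ω‖ ≤ A) {t s u : ℝ}
    (hu : u ∈ Set.Ioc 0 s) (ω : Ω) :
    ‖b (t + u) ω - b t ω‖ ≤ √(sqOscillation b t s ω) :=
  Real.le_sqrt_of_sq_le <| le_real_biSup (g := fun u => ‖b (t + u) ω - b t ω‖ ^ 2)
    (fun _ _ => sq_norm_sub_le_of_norm_le (hA _ ω) (hA t ω)) hu

variable [MeasurableSpace E] [BorelSpace E] [SecondCountableTopology E]

lemma measurable_sqOscillation (hb : ∀ t, Measurable (b t))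
    (hrc : ∀ ω t, ContinuousWithinAt (b · ω) (Set.Ici t) t) (hA : ∀ t ω, ‖b t ω‖ ≤ A)
    (t s : ℝ) : Measurable (sqOscillation b t s) := by
  have hshift (ω : Ω) (u : ℝ) : ContinuousWithinAt (fun v => b (t + v) ω) (Set.Ici u) u :=
    (hrc ω (t + u)).comp (continuous_const_add t).continuousWithinAt
      fun v hv => add_le_add_right (Set.mem_Ici.1 hv) t
  have hrat : sqOscillation b t s = fun ω =>
      ⨆ u ∈ Set.Ioc 0 s ∩ insert s (Set.range ((↑) : ℚ → ℝ)), ‖b (t + u) ω - b t ω‖ ^ 2 :=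
    funext fun ω => biSup_Ioc_eq_biSup_rat (fun _ => sq_nonneg _)
      (fun _ _ => sq_norm_sub_le_of_norm_le (hA _ ω) (hA t ω))
      fun u => (((hshift ω u).sub continuousWithinAt_const).norm).pow 2
  rw [hrat]
  exact .biSup _ (((Set.countable_range _).insert s).mono Set.inter_subset_right)
    fun u _ => ((hb (t + u)).sub (hb t)).norm.pow_const 2

lemma integrable_sqOscillation [IsFiniteMeasure μ] (hb : ∀ t, Measurable (b t))
    (hrc : ∀ ω t, ContinuousWithinAt (b · ω) (Set.Ici t) t) (hA : ∀ t ω, ‖b t ω‖ ≤ A)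
    (t s : ℝ) : Integrable (sqOscillation b t s) μ :=
  .of_bound (measurable_sqOscillation hb hrc hA t s).aestronglyMeasurable ((2 * A) ^ 2) <|
    .of_forall fun ω => by
      simpa only [Real.norm_eq_abs, abs_of_nonneg (sqOscillation_nonneg t s ω)]
        using sqOscillation_le hA t s ω

lemma eta_le_two_mul [IsFiniteMeasure μ] (hb : ∀ t, Measurable (b t))
    (hrc : ∀ ω t, ContinuousWithinAt (b · ω) (Set.Ici t) t) (hA : ∀ t ω, ‖b t ω‖ ≤ A)
    (t s : ℝ) : ∀ᵐ ω ∂μ, eta μ F b t s ω ≤ 2 * A := by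
  have hmono : μ[sqOscillation b t s | F t] ≤ᵐ[μ] μ[fun _ => (2 * A) ^ 2 | F t] :=
    condExp_mono (integrable_sqOscillation hb hrc hA t s) (integrable_const _)
      (.of_forall (sqOscillation_le hA t s))
  rw [condExp_const (F.le t)] at hmono
  filter_upwards [hmono] with ω hω
  have hA0 : 0 ≤ A := (norm_nonneg _).trans (hA t ω)
  exact (Real.sqrt_le_left (by positivity)).2 hω

lemma intervalIntegrable_of_rightContinuous (hb : ∀ t, Measurable (b t))
    (hrc : ∀ ω t, ContinuousWithinAt (b · ω) (Set.Ici t) t) (hA : ∀ t ω, ‖b t ω‖ ≤ A)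
    (ω : Ω) (r t : ℝ) : IntervalIntegrable (b · ω) volume r t := by
  have hpath : Measurable (b · ω) :=
    (measurable_uncurry_of_rightContinuous hb hrc).comp measurable_prodMk_right
  refine (intervalIntegrable_const (c := A)).mono_fun hpath.aestronglyMeasurable
    (.of_forall fun s => ?_)
  exact (hA s ω).trans (le_abs_self A)

variable [NormedSpace ℝ E]

lemma stronglyMeasurable_intervalIntegral (hb : ∀ t, Measurable (b t))
    (hrc : ∀ ω t, ContinuousWithinAt (b · ω) (Set.Ici t) t) (r t : ℝ) :
    StronglyMeasurable fun ω => ∫ u in r..t, b u ω := by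
  have hjoint := (measurable_uncurry_of_rightContinuous hb hrc).stronglyMeasurable
  exact hjoint.integral_prod_left.sub hjoint.integral_prod_left

lemma integrable_intervalIntegral [IsFiniteMeasure μ] (hb : ∀ t, Measurable (b t))
    (hrc : ∀ ω t, ContinuousWithinAt (b · ω) (Set.Ici t) t) (hA : ∀ t ω, ‖b t ω‖ ≤ A)
    (r t : ℝ) : Integrable (fun ω => ∫ u in r..t, b u ω) μ :=
  .of_bound (stronglyMeasurable_intervalIntegral hb hrc r t).aestronglyMeasurable (A * |t - r|) <|
    .of_forall fun ω => intervalIntegral.norm_integral_le_of_norm_le_const fun u _ => hA u ω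

variable [CompleteSpace E]

lemma norm_condExp_intervalIntegral_sub_smul_le [IsFiniteMeasure μ] (hb : Adapted F b)
    (hrc : ∀ ω t, ContinuousWithinAt (b · ω) (Set.Ici t) t) (hA : ∀ t ω, ‖b t ω‖ ≤ A)
    (t : ℝ) {s : ℝ} (hs : 0 ≤ s) :
    ∀ᵐ ω ∂μ, ‖(μ[fun ω => ∫ u in t..t + s, b u ω | F t]) ω - s • b t ω‖ ≤
      s * eta μ F b t s ω := by
  have hbm (r : ℝ) : Measurable (b r) := (hb r).mono (F.le r) le_rfl
  have hint := integrable_intervalIntegral (μ := μ) hbm hrc hA t (t + s)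
  have hbt : Integrable (s • b t) μ :=
    (Integrable.of_bound (hbm t).aestronglyMeasurable A (.of_forall (hA t))).smul s
  have hcond : μ[s • b t | F t] = s • b t :=
    condExp_of_stronglyMeasurable (F.le t) ((hb t).stronglyMeasurable.const_smul s) hbt
  have hdiff (ω : Ω) : ‖(∫ u in t..t + s, b u ω) - s • b t ω‖ ≤ s * √(sqOscillation b t s ω) :=
    norm_integral_sub_smul_le hs (intervalIntegrable_of_rightContinuous hbm hrc hA ω _ _)
      fun u hu => norm_sub_le_sqrt_sqOscillation hA hu ω
  filter_upwards [condExp_sub hint hbt (F t),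
    norm_condExp_le_mul_sqrt_condExp (m := F t) hs (hint.sub hbt).aestronglyMeasurable
      (integrable_sqOscillation hbm hrc hA t s) (.of_forall (sqOscillation_nonneg t s))
      (.of_forall hdiff)] with ω hsub hle
  rwa [hsub, Pi.sub_apply, hcond] at hle

lemma condExp_increment_eq_condExp_intervalIntegral [IsFiniteMeasure μ]
    (hb : ∀ t, Measurable (b t)) (hrc : ∀ ω t, ContinuousWithinAt (b · ω) (Set.Ici t) t)
    (hA : ∀ t ω, ‖b t ω‖ ≤ A) {Y M : ℝ → Ω → E}
    (hM : ∀ t ω, M t ω = Y t ω - ∫ u in (0 : ℝ)..t, b u ω)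
    (hMart : ∀ s t : ℝ, 0 ≤ s → s ≤ t → Integrable (M t) μ ∧ μ[M t | F s] =ᵐ[μ] M s)
    {r t : ℝ} (hr : 0 ≤ r) (hrt : r ≤ t) :
    μ[Y t - Y r | F r] =ᵐ[μ] μ[fun ω => ∫ u in r..t, b u ω | F r] := by
  obtain ⟨hMt, hMt_cond⟩ := hMart r t hr hrt
  obtain ⟨hMr, hMr_cond⟩ := hMart r r hr le_rfl
  have hY : Y t - Y r = (M t - M r) + fun ω => ∫ u in r..t, b u ω := by
    funext ω
    have hii := intervalIntegrable_of_rightContinuous hb hrc hA ω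
    simp only [Pi.sub_apply, Pi.add_apply, hM,
      ← intervalIntegral.integral_interval_sub_left (hii 0 t) (hii 0 r)]
    abel
  rw [hY]
  filter_upwards [condExp_add (hMt.sub hMr) (integrable_intervalIntegral hb hrc hA r t) (F r),
    condExp_sub hMt hMr (F r), hMt_cond, hMr_cond] with ω hadd hsub ht hr
  rw [hadd, Pi.add_apply, hsub, Pi.sub_apply, ht, hr, sub_self, zero_add]

theorem stmt11_general [IsFiniteMeasure μ] (hb : Adapted F b)
    (hrc : ∀ ω t, ContinuousWithinAt (b · ω) (Set.Ici t) t) (hA : ∀ t ω, ‖b t ω‖ ≤ A)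
    {Y M : ℝ → Ω → E} (hM : ∀ t ω, M t ω = Y t ω - ∫ u in (0 : ℝ)..t, b u ω)
    (hMart : ∀ s t : ℝ, 0 ≤ s → s ≤ t → Integrable (M t) μ ∧ μ[M t | F s] =ᵐ[μ] M s)
    {t s : ℝ} (ht : 0 ≤ t) (hs : 0 ≤ s) :
    ∀ᵐ ω ∂μ,
      ‖(μ[Y (t + s) - Y t | F t]) ω - s • b t ω‖ ≤ s * eta μ F b t s ω ∧
      s * eta μ F b t s ω ≤ 2 * A * s := by
  have hbm (r : ℝ) : Measurable (b r) := (hb r).mono (F.le r) le_rfl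
  filter_upwards [condExp_increment_eq_condExp_intervalIntegral hbm hrc hA hM hMart ht
      (le_add_of_nonneg_right hs), norm_condExp_intervalIntegral_sub_smul_le hb hrc hA t hs,
    eta_le_two_mul (F := F) hbm hrc hA t s] with ω hincr hle heta
  rw [hincr, mul_comm (2 * A)]
  exact ⟨hle, mul_le_mul_of_nonneg_left heta hs⟩

end BoundedProcess

/-- If `Y` is adapted and right-continuous with `Y_0 = 0`, `b` is adapted càdlàg with
`‖b_t‖ ≤ A`, and `M_t = Y_t − ∫_0^t b_s ds` is a martingale, then for `t ∈ (0,1]`,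
`‖E(Y_t | F_0) − t b_0‖ ≤ t η(b)_{0,t} ≤ 2At` almost surely. -/
theorem stmt11 {Ω : Type*} {m0 : MeasurableSpace Ω} (μ : Measure Ω) [IsProbabilityMeasure μ]
    (F : Filtration ℝ m0) (d : ℕ) (A : ℝ) (hA : 0 < A)
    (Y : ℝ → Ω → EuclideanSpace ℝ (Fin d))
    (hYadapted : Adapted F Y)
    (hYrc : ∀ ω, ∀ t : ℝ, ContinuousWithinAt (fun s => Y s ω) (Set.Ici t) t)
    (hY0 : ∀ ω, Y 0 ω = 0)
    (b : ℝ → Ω → EuclideanSpace ℝ (Fin d))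
    (hbadapted : Adapted F b)
    (hbcadlag : ∀ ω, Cadlag fun t => b t ω)
    (hbbound : ∀ t ω, ‖b t ω‖ ≤ A)
    (M : ℝ → Ω → EuclideanSpace ℝ (Fin d))
    (hMdef : ∀ t : ℝ, ∀ ω, M t ω = Y t ω - ∫ s in (0:ℝ)..t, b s ω)
    (hMart : ∀ s t : ℝ, 0 ≤ s → s ≤ t →
      Integrable (M t) μ ∧ μ[M t | F s] =ᵐ[μ] M s) :
    ∀ t : ℝ, 0 < t → t ≤ 1 →
      ∀ᵐ ω ∂μ,
        ‖(μ[Y t | F 0]) ω - t • b 0 ω‖ ≤ t * eta μ F b 0 t ω ∧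
        t * eta μ F b 0 t ω ≤ 2 * A * t := by
  intro t ht _
  have hY : Y (0 + t) - Y 0 = Y t := funext fun ω => by simp [hY0]
  simpa only [hY] using
    stmt11_general hbadapted (fun ω => (hbcadlag ω).1) hbbound hMdef hMart le_rfl ht.le
end
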